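/- Let H be a quasi-Hopf algebra and (𝔄, ρ, Φ_ρ) a right H-comodule algebra. Then 𝒱 = 𝔄⊗H is a two-sided (𝔄,H)-Hopf module with structure maps h≻(a⊗h') = a⊗hh', (a⊗h)≺a' = ∑ a a'⟨0⟩ ⊗ h a'⟨1⟩, and ρ_𝒱(a⊗h) = ∑ a X̃¹_ρ ⊗ h₁ X̃²_ρ ⊗ h₂ X̃³_ρ, where Φ_ρ = ∑X̃¹_ρ⊗X̃²_ρ⊗X̃³_ρ. -/

import Mathlib

open TensorProduct Finset

noncomputable section

/-- A quasi-bialgebra in the sense of Drinfeld, together with chosen finite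
Sweedler-type families representing the comultiplication and the reassociator. -/
structure QuasiBialgebra (k : Type*) [Field k] (H : Type*) [Ring H] [Algebra k H] where
  comul : H →ₐ[k] H ⊗[k] H
  counit : H →ₐ[k] k
  nD : ℕ
  D1 : H → ℕ → H
  D2 : H → ℕ → H
  hcomul : ∀ h, comul h = ∑ i ∈ range nD, D1 h i ⊗ₜ[k] D2 h i
  nP : ℕ
  X1 : ℕ → H
  X2 : ℕ → H
  X3 : ℕ → H
  nQ : ℕ
  x1 : ℕ → H
  x2 : ℕ → H
  x3 : ℕ → H
  P_inv : ∑ s ∈ range nP, ∑ q ∈ range nQ,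
      (X1 s * x1 q) ⊗ₜ[k] ((X2 s * x2 q) ⊗ₜ[k] (X3 s * x3 q)) =
      (1 : H) ⊗ₜ[k] ((1 : H) ⊗ₜ[k] (1 : H))
  inv_P : ∑ q ∈ range nQ, ∑ s ∈ range nP,
      (x1 q * X1 s) ⊗ₜ[k] ((x2 q * X2 s) ⊗ₜ[k] (x3 q * X3 s)) =
      (1 : H) ⊗ₜ[k] ((1 : H) ⊗ₜ[k] (1 : H))
  coassoc : ∀ h : H,
    ∑ i ∈ range nD, ∑ j ∈ range nD,
      D1 h i ⊗ₜ[k] (D1 (D2 h i) j ⊗ₜ[k] D2 (D2 h i) j) =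
    ∑ s ∈ range nP, ∑ i ∈ range nD, ∑ j ∈ range nD, ∑ q ∈ range nQ,
      (X1 s * D1 (D1 h i) j * x1 q) ⊗ₜ[k]
        ((X2 s * D2 (D1 h i) j * x2 q) ⊗ₜ[k] (X3 s * D2 h i * x3 q))
  counit_r : ∀ h : H, ∑ i ∈ range nD, counit (D2 h i) • D1 h i = h
  counit_l : ∀ h : H, ∑ i ∈ range nD, counit (D1 h i) • D2 h i = h
  pentagon :
    ∑ p ∈ range nP, ∑ s ∈ range nP, ∑ l ∈ range nD, ∑ r ∈ range nP,
      (X1 s * X1 r) ⊗ₜ[k] ((X1 p * D1 (X2 s) l * X2 r) ⊗ₜ[k]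
        ((X2 p * D2 (X2 s) l * X3 r) ⊗ₜ[k] (X3 p * X3 s))) =
    ∑ p ∈ range nP, ∑ s ∈ range nP, ∑ l ∈ range nD, ∑ j ∈ range nD,
      (X1 p * D1 (X1 s) j) ⊗ₜ[k] ((X2 p * D2 (X1 s) j) ⊗ₜ[k]
        ((D1 (X3 p) l * X2 s) ⊗ₜ[k] (D2 (X3 p) l * X3 s)))
  normal : ∑ s ∈ range nP, counit (X2 s) • (X1 s ⊗ₜ[k] X3 s) = (1 : H) ⊗ₜ[k] (1 : H)

/-- A quasi-Hopf algebra: a quasi-bialgebra with an anti-automorphism `S`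
and elements `aE = α`, `bE = β` satisfying the antipode axioms. -/
structure QuasiHopfAlgebra (k : Type*) [Field k] (H : Type*) [Ring H] [Algebra k H]
    extends QuasiBialgebra k H where
  S : H →ₗ[k] H
  Sinv : H →ₗ[k] H
  S_Sinv : ∀ h, S (Sinv h) = h
  Sinv_S : ∀ h, Sinv (S h) = h
  S_one : S 1 = 1
  S_mul : ∀ g h : H, S (g * h) = S h * S g
  aE : H
  bE : H
  antip_l : ∀ h, ∑ i ∈ range nD, S (D1 h i) * aE * D2 h i = counit h • aE
  antip_r : ∀ h, ∑ i ∈ range nD, D1 h i * bE * S (D2 h i) = counit h • bE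
  antip_X : ∑ s ∈ range nP, X1 s * bE * S (X2 s) * aE * X3 s = 1
  antip_x : ∑ q ∈ range nQ, S (x1 q) * aE * x2 q * bE * S (x3 q) = 1

/-- The Drinfeld twist `f` of a quasi-Hopf algebra, given by families `f₁ ⊗ f₂`
with inverse `g₁ ⊗ g₂`, together with its defining formula
`f = ∑ (S⊗S)(Δᵒᵖ(x¹)) γ Δ(x²βS(x³))`, `γ = ∑ S(A²)αA³ ⊗ S(A¹)αA⁴`,
`∑A¹⊗A²⊗A³⊗A⁴ = (Φ⊗1)(Δ⊗id⊗id)(Φ⁻¹)`. -/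
structure DrinfeldTwist {k : Type*} [Field k] {H : Type*} [Ring H] [Algebra k H]
    (QH : QuasiHopfAlgebra k H) where
  nf : ℕ
  f1 : ℕ → H
  f2 : ℕ → H
  g1 : ℕ → H
  g2 : ℕ → H
  f_inv : ∑ t ∈ range nf, ∑ u ∈ range nf,
      (f1 t * g1 u) ⊗ₜ[k] (f2 t * g2 u) = (1 : H) ⊗ₜ[k] (1 : H)
  inv_f : ∑ u ∈ range nf, ∑ t ∈ range nf,
      (g1 u * f1 t) ⊗ₜ[k] (g2 u * f2 t) = (1 : H) ⊗ₜ[k] (1 : H)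
  h_f : ∑ t ∈ range nf, f1 t ⊗ₜ[k] f2 t =
    ∑ j ∈ range QH.nQ, ∑ l ∈ range QH.nD, ∑ p ∈ range QH.nP, ∑ j' ∈ range QH.nQ,
      ∑ l' ∈ range QH.nD, ∑ l'' ∈ range QH.nD,
      (QH.S (QH.D2 (QH.x1 j) l) *
          (QH.S (QH.X2 p * QH.D2 (QH.x1 j') l') * QH.aE * (QH.X3 p * QH.x2 j')) *
          QH.D1 (QH.x2 j * QH.bE * QH.S (QH.x3 j)) l'') ⊗ₜ[k]
        (QH.S (QH.D1 (QH.x1 j) l) *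
          (QH.S (QH.X1 p * QH.D1 (QH.x1 j') l') * QH.aE * QH.x3 j') *
          QH.D2 (QH.x2 j * QH.bE * QH.S (QH.x3 j)) l'')

/-- A right `H`-comodule algebra over a quasi-bialgebra, with Sweedler families. -/
structure RightComoduleAlgebra {k : Type*} [Field k] {H : Type*} [Ring H] [Algebra k H]
    (QB : QuasiBialgebra k H) (A : Type*) [Ring A] [Algebra k A] where
  rho : A →ₐ[k] A ⊗[k] H
  nR : ℕ
  r0 : A → ℕ → A
  r1 : A → ℕ → H
  hrho : ∀ a, rho a = ∑ i ∈ range nR, r0 a i ⊗ₜ[k] r1 a i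
  nP : ℕ
  P1 : ℕ → A
  P2 : ℕ → H
  P3 : ℕ → H
  nQ : ℕ
  Q1 : ℕ → A
  Q2 : ℕ → H
  Q3 : ℕ → H
  P_inv : ∑ s ∈ range nP, ∑ q ∈ range nQ,
      (P1 s * Q1 q) ⊗ₜ[k] ((P2 s * Q2 q) ⊗ₜ[k] (P3 s * Q3 q)) =
      (1 : A) ⊗ₜ[k] ((1 : H) ⊗ₜ[k] (1 : H))
  inv_P : ∑ q ∈ range nQ, ∑ s ∈ range nP,
      (Q1 q * P1 s) ⊗ₜ[k] ((Q2 q * P2 s) ⊗ₜ[k] (Q3 q * P3 s)) =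
      (1 : A) ⊗ₜ[k] ((1 : H) ⊗ₜ[k] (1 : H))
  rca1 : ∀ a : A,
    ∑ s ∈ range nP, ∑ i ∈ range nR, ∑ j ∈ range nR,
      (P1 s * r0 (r0 a i) j) ⊗ₜ[k] ((P2 s * r1 (r0 a i) j) ⊗ₜ[k] (P3 s * r1 a i)) =
    ∑ i ∈ range nR, ∑ l ∈ range QB.nD, ∑ s ∈ range nP,
      (r0 a i * P1 s) ⊗ₜ[k] ((QB.D1 (r1 a i) l * P2 s) ⊗ₜ[k] (QB.D2 (r1 a i) l * P3 s))
  rca2 :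
    ∑ s ∈ range QB.nP, ∑ i ∈ range nP, ∑ l ∈ range QB.nD, ∑ j ∈ range nP,
      (P1 i * P1 j) ⊗ₜ[k] ((QB.X1 s * QB.D1 (P2 i) l * P2 j) ⊗ₜ[k]
        ((QB.X2 s * QB.D2 (P2 i) l * P3 j) ⊗ₜ[k] (QB.X3 s * P3 i))) =
    ∑ i ∈ range nP, ∑ l ∈ range QB.nD, ∑ j ∈ range nP, ∑ u ∈ range nR,
      (P1 i * r0 (P1 j) u) ⊗ₜ[k] ((P2 i * r1 (P1 j) u) ⊗ₜ[k]
        ((QB.D1 (P3 i) l * P2 j) ⊗ₜ[k] (QB.D2 (P3 i) l * P3 j)))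
  rca3 : ∀ a, ∑ i ∈ range nR, QB.counit (r1 a i) • r0 a i = a
  rca4a : ∑ s ∈ range nP, QB.counit (P2 s) • (P1 s ⊗ₜ[k] P3 s) = (1 : A) ⊗ₜ[k] (1 : H)
  rca4b : ∑ s ∈ range nP, QB.counit (P3 s) • (P1 s ⊗ₜ[k] P2 s) = (1 : A) ⊗ₜ[k] (1 : H)

/-- A left `H`-comodule algebra over a quasi-bialgebra, with Sweedler families. -/
structure LeftComoduleAlgebra {k : Type*} [Field k] {H : Type*} [Ring H] [Algebra k H]
    (QB : QuasiBialgebra k H) (B : Type*) [Ring B] [Algebra k B] where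
  lam : B →ₐ[k] H ⊗[k] B
  nL : ℕ
  l1 : B → ℕ → H
  l0 : B → ℕ → B
  hlam : ∀ b, lam b = ∑ i ∈ range nL, l1 b i ⊗ₜ[k] l0 b i
  nP : ℕ
  P1 : ℕ → H
  P2 : ℕ → H
  P3 : ℕ → B
  nQ : ℕ
  Q1 : ℕ → H
  Q2 : ℕ → H
  Q3 : ℕ → B
  P_inv : ∑ s ∈ range nP, ∑ q ∈ range nQ,
      (P1 s * Q1 q) ⊗ₜ[k] ((P2 s * Q2 q) ⊗ₜ[k] (P3 s * Q3 q)) =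
      (1 : H) ⊗ₜ[k] ((1 : H) ⊗ₜ[k] (1 : B))
  inv_P : ∑ q ∈ range nQ, ∑ s ∈ range nP,
      (Q1 q * P1 s) ⊗ₜ[k] ((Q2 q * P2 s) ⊗ₜ[k] (Q3 q * P3 s)) =
      (1 : H) ⊗ₜ[k] ((1 : H) ⊗ₜ[k] (1 : B))
  lca1 : ∀ b : B,
    ∑ i ∈ range nL, ∑ l ∈ range nL, ∑ s ∈ range nP,
      (l1 b i * P1 s) ⊗ₜ[k] ((l1 (l0 b i) l * P2 s) ⊗ₜ[k] (l0 (l0 b i) l * P3 s)) =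
    ∑ s ∈ range nP, ∑ i ∈ range nL, ∑ l ∈ range QB.nD,
      (P1 s * QB.D1 (l1 b i) l) ⊗ₜ[k] ((P2 s * QB.D2 (l1 b i) l) ⊗ₜ[k] (P3 s * l0 b i))
  lca2 :
    ∑ p ∈ range nP, ∑ s ∈ range nP, ∑ l ∈ range QB.nD, ∑ r ∈ range QB.nP,
      (P1 s * QB.X1 r) ⊗ₜ[k] ((P1 p * QB.D1 (P2 s) l * QB.X2 r) ⊗ₜ[k]
        ((P2 p * QB.D2 (P2 s) l * QB.X3 r) ⊗ₜ[k] (P3 p * P3 s))) =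
    ∑ p ∈ range nP, ∑ s ∈ range nP, ∑ j ∈ range QB.nD, ∑ l ∈ range nL,
      (P1 p * QB.D1 (P1 s) j) ⊗ₜ[k] ((P2 p * QB.D2 (P1 s) j) ⊗ₜ[k]
        ((l1 (P3 p) l * P2 s) ⊗ₜ[k] (l0 (P3 p) l * P3 s)))
  lca3 : ∀ b, ∑ i ∈ range nL, QB.counit (l1 b i) • l0 b i = b
  lca4a : ∑ s ∈ range nP, QB.counit (P2 s) • (P1 s ⊗ₜ[k] P3 s) = (1 : H) ⊗ₜ[k] (1 : B)
  lca4b : ∑ s ∈ range nP, QB.counit (P1 s) • (P2 s ⊗ₜ[k] P3 s) = (1 : H) ⊗ₜ[k] (1 : B)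

/-- An algebra in the monoidal category of left `H`-modules
(a left `H`-module algebra), on a carrier `V`. -/
structure LeftModuleAlgebra {k : Type*} [Field k] {H : Type*} [Ring H] [Algebra k H]
    (QB : QuasiBialgebra k H) (V : Type*) [AddCommMonoid V] [Module k V] where
  mul : V →ₗ[k] V →ₗ[k] V
  one : V
  act : H →ₗ[k] V →ₗ[k] V
  act_one : ∀ v, act 1 v = v
  act_mul : ∀ g h v, act (g * h) v = act g (act h v)
  mul_one : ∀ v, mul v one = v
  one_mul : ∀ v, mul one v = v
  mul_assoc : ∀ u v w, mul (mul u v) w =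
    ∑ s ∈ range QB.nP, mul (act (QB.X1 s) u) (mul (act (QB.X2 s) v) (act (QB.X3 s) w))
  act_mul_mul : ∀ h u v, act h (mul u v) =
    ∑ i ∈ range QB.nD, mul (act (QB.D1 h i) u) (act (QB.D2 h i) v)
  act_unit : ∀ h, act h one = QB.counit h • one

/-- The right action `φ ↦ h ⇀ φ`, `(h ⇀ φ)(h') = φ(h'h)`. -/
def rA (k : Type*) [Field k] {H : Type*} [Ring H] [Algebra k H] (h : H) :
    Module.Dual k H →ₗ[k] Module.Dual k H :=
  LinearMap.lcomp k k (LinearMap.mulRight k h)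

/-- The left action `φ ↦ φ ↼ h`, `(φ ↼ h)(h') = φ(hh')`. -/
def lA (k : Type*) [Field k] {H : Type*} [Ring H] [Algebra k H] (h : H) :
    Module.Dual k H →ₗ[k] Module.Dual k H :=
  LinearMap.lcomp k k (LinearMap.mulLeft k h)

/-- Convolution product on the dual of a "coalgebra" with comultiplication `DC`. -/
def convC {k : Type*} [Field k] {C : Type*} [AddCommGroup C] [Module k C]
    (DC : C →ₗ[k] C ⊗[k] C) (φ ψ : Module.Dual k C) : Module.Dual k C :=
  (TensorProduct.lid k k).toLinearMap ∘ₗ (TensorProduct.map φ ψ) ∘ₗ DC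

/-- A two-sided `(𝔄, H)`-Hopf module. -/
structure TwoSidedHopfModule {k : Type*} [Field k] {H : Type*} [Ring H] [Algebra k H]
    (QB : QuasiBialgebra k H) {A : Type*} [Ring A] [Algebra k A]
    (CA : RightComoduleAlgebra QB A) (M : Type*) [AddCommGroup M] [Module k M] where
  ha : H →ₗ[k] M →ₗ[k] M
  ha_one : ∀ m, ha 1 m = m
  ha_mul : ∀ g h m, ha (g * h) m = ha g (ha h m)
  ra : A →ₗ[k] M →ₗ[k] M
  ra_one : ∀ m, ra 1 m = m
  ra_mul : ∀ a b m, ra (a * b) m = ra b (ra a m)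
  ha_ra : ∀ h a m, ha h (ra a m) = ra a (ha h m)
  rho : M →ₗ[k] M ⊗[k] H
  counit_rho : ∀ m,
    (TensorProduct.rid k M) ((TensorProduct.map LinearMap.id QB.counit.toLinearMap) (rho m)) = m
  coassoc_rho : ∀ m,
    ∑ s ∈ range QB.nP,
      (TensorProduct.map (ha (QB.X1 s))
        (TensorProduct.map (LinearMap.mulLeft k (QB.X2 s)) (LinearMap.mulLeft k (QB.X3 s))))
        ((TensorProduct.assoc k M H H) ((TensorProduct.map rho LinearMap.id) (rho m))) =
    ∑ j ∈ range CA.nP,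
      (TensorProduct.map (ra (CA.P1 j))
        (TensorProduct.map (LinearMap.mulRight k (CA.P2 j)) (LinearMap.mulRight k (CA.P3 j))))
        ((TensorProduct.map LinearMap.id QB.comul.toLinearMap) (rho m))
  colin_l : ∀ h m, rho (ha h m) =
    ∑ i ∈ range QB.nD,
      (TensorProduct.map (ha (QB.D1 h i)) (LinearMap.mulLeft k (QB.D2 h i))) (rho m)
  colin_r : ∀ a m, rho (ra a m) =
    ∑ i ∈ range CA.nR,
      (TensorProduct.map (ra (CA.r0 a i)) (LinearMap.mulRight k (CA.r1 a i))) (rho m)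

/-- A right `(H^*, A)`-Hopf module over a left `H`-module algebra `A` (carrier `V`). -/
structure RelHopfModule {k : Type*} [Field k] {H : Type*} [Ring H] [Algebra k H]
    (QB : QuasiBialgebra k H) {V : Type*} [AddCommMonoid V] [Module k V]
    (MA : LeftModuleAlgebra QB V) (M : Type*) [AddCommGroup M] [Module k M] where
  hb : H →ₗ[k] M →ₗ[k] M
  hb_one : ∀ m, hb 1 m = m
  hb_mul : ∀ g h m, hb (g * h) m = hb g (hb h m)
  rb : V →ₗ[k] M →ₗ[k] M
  rb_one : ∀ m, rb MA.one m = m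
  rb_assoc : ∀ m u v, rb v (rb u m) =
    ∑ s ∈ range QB.nP, rb (MA.mul (MA.act (QB.X2 s) u) (MA.act (QB.X3 s) v)) (hb (QB.X1 s) m)
  hb_rb : ∀ h u m, hb h (rb u m) =
    ∑ i ∈ range QB.nD, rb (MA.act (QB.D2 h i) u) (hb (QB.D1 h i) m)

/-- A right module over the (possibly nonassociative) algebra `(V, mul, one)`. -/
structure RightAlgModule (k : Type*) [Field k] {V : Type*} [AddCommMonoid V] [Module k V]
    (mul : V →ₗ[k] V →ₗ[k] V) (one : V) (N : Type*) [AddCommGroup N] [Module k N] where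
  ract : V →ₗ[k] N →ₗ[k] N
  ract_one : ∀ n, ract one n = n
  ract_mul : ∀ u v n, ract (mul u v) n = ract v (ract u n)

/-- A left `H'`-comodule algebra structure on a carrier `V` equipped with a
(bilinear, possibly nonassociative) multiplication `mulV` and unit `oneV`. -/
structure LeftComoduleAlgebraS {k : Type*} [Field k] {H' : Type*} [Ring H'] [Algebra k H']
    (QB : QuasiBialgebra k H') (V : Type*) [AddCommMonoid V] [Module k V]
    (mulV : V →ₗ[k] V →ₗ[k] V) (oneV : V) where
  lam : V →ₗ[k] H' ⊗[k] V
  nL : ℕ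
  l1 : V → ℕ → H'
  l0 : V → ℕ → V
  hlam : ∀ v, lam v = ∑ i ∈ range nL, l1 v i ⊗ₜ[k] l0 v i
  lam_one : lam oneV = (1 : H') ⊗ₜ[k] oneV
  lam_mul : ∀ u v, lam (mulV u v) =
    ∑ i ∈ range nL, ∑ j ∈ range nL, (l1 u i * l1 v j) ⊗ₜ[k] mulV (l0 u i) (l0 v j)
  nP : ℕ
  P1 : ℕ → H'
  P2 : ℕ → H'
  P3 : ℕ → V
  nQ : ℕ
  Q1 : ℕ → H'
  Q2 : ℕ → H'
  Q3 : ℕ → V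
  P_inv : ∑ s ∈ range nP, ∑ q ∈ range nQ,
      (P1 s * Q1 q) ⊗ₜ[k] ((P2 s * Q2 q) ⊗ₜ[k] mulV (P3 s) (Q3 q)) =
      (1 : H') ⊗ₜ[k] ((1 : H') ⊗ₜ[k] oneV)
  inv_P : ∑ q ∈ range nQ, ∑ s ∈ range nP,
      (Q1 q * P1 s) ⊗ₜ[k] ((Q2 q * P2 s) ⊗ₜ[k] mulV (Q3 q) (P3 s)) =
      (1 : H') ⊗ₜ[k] ((1 : H') ⊗ₜ[k] oneV)
  lca1 : ∀ v : V,
    ∑ i ∈ range nL, ∑ l ∈ range nL, ∑ s ∈ range nP,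
      (l1 v i * P1 s) ⊗ₜ[k] ((l1 (l0 v i) l * P2 s) ⊗ₜ[k] mulV (l0 (l0 v i) l) (P3 s)) =
    ∑ s ∈ range nP, ∑ i ∈ range nL, ∑ l ∈ range QB.nD,
      (P1 s * QB.D1 (l1 v i) l) ⊗ₜ[k] ((P2 s * QB.D2 (l1 v i) l) ⊗ₜ[k] mulV (P3 s) (l0 v i))
  lca2 :
    ∑ p ∈ range nP, ∑ s ∈ range nP, ∑ l ∈ range QB.nD, ∑ r ∈ range QB.nP,
      (P1 s * QB.X1 r) ⊗ₜ[k] ((P1 p * QB.D1 (P2 s) l * QB.X2 r) ⊗ₜ[k]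
        ((P2 p * QB.D2 (P2 s) l * QB.X3 r) ⊗ₜ[k] mulV (P3 p) (P3 s))) =
    ∑ p ∈ range nP, ∑ s ∈ range nP, ∑ j ∈ range QB.nD, ∑ l ∈ range nL,
      (P1 p * QB.D1 (P1 s) j) ⊗ₜ[k] ((P2 p * QB.D2 (P1 s) j) ⊗ₜ[k]
        ((l1 (P3 p) l * P2 s) ⊗ₜ[k] mulV (l0 (P3 p) l) (P3 s)))
  lca3 : ∀ v, ∑ i ∈ range nL, QB.counit (l1 v i) • l0 v i = v
  lca4a : ∑ s ∈ range nP, QB.counit (P2 s) • (P1 s ⊗ₜ[k] P3 s) = (1 : H') ⊗ₜ[k] oneV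
  lca4b : ∑ s ∈ range nP, QB.counit (P1 s) • (P2 s ⊗ₜ[k] P3 s) = (1 : H') ⊗ₜ[k] oneV

/-- A right-left Doi-Hopf module over the quasi-bialgebra `QB'`, a left comodule
algebra (given by its carrier `V`, multiplication data and coaction families) and a
module coalgebra `C` (given by its comultiplication `DC`, counit `eC` and right
`H'`-action `actC`). -/
structure DoiHopfModule {k : Type*} [Field k] {H' : Type*} [Ring H'] [Algebra k H']
    (QB' : QuasiBialgebra k H') {V : Type*} [AddCommMonoid V] [Module k V]
    (mulV : V →ₗ[k] V →ₗ[k] V) (oneV : V)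
    (nL : ℕ) (l1 : V → ℕ → H') (l0 : V → ℕ → V)
    (nPl : ℕ) (Pl1 Pl2 : ℕ → H') (Pl3 : ℕ → V)
    {C : Type*} [AddCommGroup C] [Module k C]
    (DC : C →ₗ[k] C ⊗[k] C) (eC : C →ₗ[k] k) (actC : H' →ₗ[k] C →ₗ[k] C)
    (N : Type*) [AddCommGroup N] [Module k N] where
  ract : V →ₗ[k] N →ₗ[k] N
  ract_one : ∀ n, ract oneV n = n
  ract_mul : ∀ u v n, ract (mulV u v) n = ract v (ract u n)
  rhoN : N →ₗ[k] C ⊗[k] N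
  dh2 : ∀ n, (TensorProduct.lid k N) ((TensorProduct.map eC LinearMap.id) (rhoN n)) = n
  dh1 : ∀ n,
    (TensorProduct.assoc k C C N) ((TensorProduct.map DC LinearMap.id) (rhoN n)) =
    ∑ j ∈ range nPl,
      (TensorProduct.map (actC (Pl1 j)) (TensorProduct.map (actC (Pl2 j)) (ract (Pl3 j))))
        ((TensorProduct.map LinearMap.id rhoN) (rhoN n))
  dh3 : ∀ v n, rhoN (ract v n) =
    ∑ w ∈ range nL, (TensorProduct.map (actC (l1 v w)) (ract (l0 v w))) (rhoN n)

/-- A right `H`-module coalgebra, with Sweedler families for the comultiplication. -/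
structure RightModuleCoalgebra {k : Type*} [Field k] {H : Type*} [Ring H] [Algebra k H]
    (QB : QuasiBialgebra k H) (C : Type*) [AddCommGroup C] [Module k C] where
  act : H →ₗ[k] C →ₗ[k] C
  act_one : ∀ c, act 1 c = c
  act_mul : ∀ g h c, act (g * h) c = act h (act g c)
  DC : C →ₗ[k] C ⊗[k] C
  nC : ℕ
  C1 : C → ℕ → C
  C2 : C → ℕ → C
  hDC : ∀ c, DC c = ∑ i ∈ range nC, C1 c i ⊗ₜ[k] C2 c i
  eC : C →ₗ[k] k
  counit_l : ∀ c, ∑ i ∈ range nC, eC (C1 c i) • C2 c i = c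
  counit_r : ∀ c, ∑ i ∈ range nC, eC (C2 c i) • C1 c i = c
  rmc1 : ∀ c : C,
    ∑ i ∈ range nC, ∑ j ∈ range nC, ∑ q ∈ range QB.nQ,
      act (QB.x1 q) (C1 (C1 c i) j) ⊗ₜ[k]
        (act (QB.x2 q) (C2 (C1 c i) j) ⊗ₜ[k] act (QB.x3 q) (C2 c i)) =
    ∑ i ∈ range nC, ∑ j ∈ range nC,
      C1 c i ⊗ₜ[k] (C1 (C2 c i) j ⊗ₜ[k] C2 (C2 c i) j)
  rmc2 : ∀ c h,
    ∑ i ∈ range nC, C1 (act h c) i ⊗ₜ[k] C2 (act h c) i =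
    ∑ i ∈ range nC, ∑ l ∈ range QB.nD,
      act (QB.D1 h l) (C1 c i) ⊗ₜ[k] act (QB.D2 h l) (C2 c i)
  rmc3 : ∀ c h, eC (act h c) = eC c * QB.counit h

/-- An `H`-bimodule coalgebra: a coalgebra in the monoidal category of
`(H,H)`-bimodules, with Sweedler families. -/
structure HBimoduleCoalgebra {k : Type*} [Field k] {H : Type*} [Ring H] [Algebra k H]
    (QB : QuasiBialgebra k H) (C : Type*) [AddCommGroup C] [Module k C] where
  lact : H →ₗ[k] C →ₗ[k] C
  lact_one : ∀ c, lact 1 c = c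
  lact_mul : ∀ g h c, lact (g * h) c = lact g (lact h c)
  ract : H →ₗ[k] C →ₗ[k] C
  ract_one : ∀ c, ract 1 c = c
  ract_mul : ∀ g h c, ract (g * h) c = ract h (ract g c)
  lact_ract : ∀ g h c, lact g (ract h c) = ract h (lact g c)
  DC : C →ₗ[k] C ⊗[k] C
  nC : ℕ
  C1 : C → ℕ → C
  C2 : C → ℕ → C
  hDC : ∀ c, DC c = ∑ i ∈ range nC, C1 c i ⊗ₜ[k] C2 c i
  eC : C →ₗ[k] k
  counit_l : ∀ c, ∑ i ∈ range nC, eC (C1 c i) • C2 c i = c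
  counit_r : ∀ c, ∑ i ∈ range nC, eC (C2 c i) • C1 c i = c
  bmc1 : ∀ c : C,
    ∑ s ∈ range QB.nP, ∑ i ∈ range nC, ∑ j ∈ range nC, ∑ q ∈ range QB.nQ,
      lact (QB.X1 s) (ract (QB.x1 q) (C1 (C1 c i) j)) ⊗ₜ[k]
        (lact (QB.X2 s) (ract (QB.x2 q) (C2 (C1 c i) j)) ⊗ₜ[k]
          lact (QB.X3 s) (ract (QB.x3 q) (C2 c i))) =
    ∑ i ∈ range nC, ∑ j ∈ range nC,
      C1 c i ⊗ₜ[k] (C1 (C2 c i) j ⊗ₜ[k] C2 (C2 c i) j)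
  bmc2l : ∀ c h,
    ∑ i ∈ range nC, C1 (lact h c) i ⊗ₜ[k] C2 (lact h c) i =
    ∑ l ∈ range QB.nD, ∑ i ∈ range nC,
      lact (QB.D1 h l) (C1 c i) ⊗ₜ[k] lact (QB.D2 h l) (C2 c i)
  bmc2r : ∀ c h,
    ∑ i ∈ range nC, C1 (ract h c) i ⊗ₜ[k] C2 (ract h c) i =
    ∑ l ∈ range QB.nD, ∑ i ∈ range nC,
      ract (QB.D1 h l) (C1 c i) ⊗ₜ[k] ract (QB.D2 h l) (C2 c i)
  bmc3l : ∀ c h, eC (lact h c) = QB.counit h * eC c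
  bmc3r : ∀ c h, eC (ract h c) = eC c * QB.counit h

/-- An `H`-bicomodule algebra `(𝔸, λ, ρ, Φ_λ, Φ_ρ, Φ_{λ,ρ})`. -/
structure BicomoduleAlgebra {k : Type*} [Field k] {H : Type*} [Ring H] [Algebra k H]
    (QB : QuasiBialgebra k H) (A : Type*) [Ring A] [Algebra k A] where
  rca : RightComoduleAlgebra QB A
  lca : LeftComoduleAlgebra QB A
  nO : ℕ
  O1 : ℕ → H
  O2 : ℕ → A
  O3 : ℕ → H
  nW : ℕ
  w1 : ℕ → H
  w2 : ℕ → A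
  w3 : ℕ → H
  O_inv : ∑ v ∈ range nO, ∑ w ∈ range nW,
      (O1 v * w1 w) ⊗ₜ[k] ((O2 v * w2 w) ⊗ₜ[k] (O3 v * w3 w)) =
      (1 : H) ⊗ₜ[k] ((1 : A) ⊗ₜ[k] (1 : H))
  inv_O : ∑ w ∈ range nW, ∑ v ∈ range nO,
      (w1 w * O1 v) ⊗ₜ[k] ((w2 w * O2 v) ⊗ₜ[k] (w3 w * O3 v)) =
      (1 : H) ⊗ₜ[k] ((1 : A) ⊗ₜ[k] (1 : H))
  bca1 : ∀ a : A,
    ∑ v ∈ range nO, ∑ r ∈ range rca.nR, ∑ l ∈ range lca.nL,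
      (O1 v * lca.l1 (rca.r0 a r) l) ⊗ₜ[k]
        ((O2 v * lca.l0 (rca.r0 a r) l) ⊗ₜ[k] (O3 v * rca.r1 a r)) =
    ∑ l ∈ range lca.nL, ∑ r ∈ range rca.nR, ∑ v ∈ range nO,
      (lca.l1 a l * O1 v) ⊗ₜ[k]
        ((rca.r0 (lca.l0 a l) r * O2 v) ⊗ₜ[k] (rca.r1 (lca.l0 a l) r * O3 v))
  bca2 :
    ∑ v ∈ range nO, ∑ v' ∈ range nO, ∑ l ∈ range lca.nL, ∑ j ∈ range lca.nP,
      (O1 v' * lca.P1 j) ⊗ₜ[k] ((O1 v * lca.l1 (O2 v') l * lca.P2 j) ⊗ₜ[k]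
        ((O2 v * lca.l0 (O2 v') l * lca.P3 j) ⊗ₜ[k] (O3 v * O3 v'))) =
    ∑ j ∈ range lca.nP, ∑ v ∈ range nO, ∑ i ∈ range QB.nD, ∑ r ∈ range rca.nR,
      (lca.P1 j * QB.D1 (O1 v) i) ⊗ₜ[k] ((lca.P2 j * QB.D2 (O1 v) i) ⊗ₜ[k]
        ((rca.r0 (lca.P3 j) r * O2 v) ⊗ₜ[k] (rca.r1 (lca.P3 j) r * O3 v)))
  bca3 :
    ∑ s ∈ range rca.nP, ∑ v ∈ range nO, ∑ r ∈ range rca.nR, ∑ v' ∈ range nO,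
      (O1 v * O1 v') ⊗ₜ[k] ((rca.P1 s * rca.r0 (O2 v) r * O2 v') ⊗ₜ[k]
        ((rca.P2 s * rca.r1 (O2 v) r * O3 v') ⊗ₜ[k] (rca.P3 s * O3 v))) =
    ∑ v ∈ range nO, ∑ i ∈ range QB.nD, ∑ s ∈ range rca.nP, ∑ l ∈ range lca.nL,
      (O1 v * lca.l1 (rca.P1 s) l) ⊗ₜ[k] ((O2 v * lca.l0 (rca.P1 s) l) ⊗ₜ[k]
        ((QB.D1 (O3 v) i * rca.P2 s) ⊗ₜ[k] (QB.D2 (O3 v) i * rca.P3 s)))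

/-- A two-sided two-cosided `(H, 𝔸, C)`-Hopf module. -/
structure TwoSidedTwoCosided {k : Type*} [Field k] {H : Type*} [Ring H] [Algebra k H]
    (QB : QuasiBialgebra k H) {A : Type*} [Ring A] [Algebra k A]
    (BA : BicomoduleAlgebra QB A) {C : Type*} [AddCommGroup C] [Module k C]
    (lactC ractC : H →ₗ[k] C →ₗ[k] C) (DC : C →ₗ[k] C ⊗[k] C) (eC : C →ₗ[k] k)
    (N : Type*) [AddCommGroup N] [Module k N]
    extends TwoSidedHopfModule QB BA.rca N where
  rhoC : N →ₗ[k] C ⊗[k] N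
  counit_rhoC : ∀ n,
    (TensorProduct.lid k N) ((TensorProduct.map eC LinearMap.id) (rhoC n)) = n
  tstc1 : ∀ n,
    ∑ s ∈ range QB.nP,
      (TensorProduct.map (lactC (QB.X1 s))
        (TensorProduct.map (lactC (QB.X2 s)) (ha (QB.X3 s))))
        ((TensorProduct.assoc k C C N) ((TensorProduct.map DC LinearMap.id) (rhoC n))) =
    ∑ j ∈ range BA.lca.nP,
      (TensorProduct.map (ractC (BA.lca.P1 j))
        (TensorProduct.map (ractC (BA.lca.P2 j)) (ra (BA.lca.P3 j))))
        ((TensorProduct.map LinearMap.id rhoC) (rhoC n))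
  tstc2 : ∀ n,
    ∑ s ∈ range QB.nP,
      (TensorProduct.map (lactC (QB.X1 s))
        (TensorProduct.map (ha (QB.X2 s)) (LinearMap.mulLeft k (QB.X3 s))))
        ((TensorProduct.assoc k C N H) ((TensorProduct.map rhoC LinearMap.id) (rho n))) =
    ∑ v ∈ range BA.nO,
      (TensorProduct.map (ractC (BA.O1 v))
        (TensorProduct.map (ra (BA.O2 v)) (LinearMap.mulRight k (BA.O3 v))))
        ((TensorProduct.map LinearMap.id rho) (rhoC n))
  tstc3 : ∀ h n, rhoC (ha h n) =
    ∑ i ∈ range QB.nD,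
      (TensorProduct.map (lactC (QB.D1 h i)) (ha (QB.D2 h i))) (rhoC n)
  tstc4 : ∀ a n, rhoC (ra a n) =
    ∑ l ∈ range BA.lca.nL,
      (TensorProduct.map (ractC (BA.lca.l1 a l)) (ra (BA.lca.l0 a l))) (rhoC n)

namespace QuasiBialgebra

variable {k : Type*} [Field k] {H : Type*} [Ring H] [Algebra k H] (QB : QuasiBialgebra k H)

/-- The reassociator `Φ`. -/
def reassoc : H ⊗[k] (H ⊗[k] H) :=
  ∑ s ∈ range QB.nP, QB.X1 s ⊗ₜ[k] (QB.X2 s ⊗ₜ[k] QB.X3 s)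

/-- The algebra map `(Δ ⊗ id) ∘ Δ`, reassociated to the right. -/
def comulLeft : H →ₐ[k] H ⊗[k] (H ⊗[k] H) :=
  ((Algebra.TensorProduct.assoc k k k H H H).toAlgHom.comp
    (Algebra.TensorProduct.map QB.comul (AlgHom.id k H))).comp QB.comul

/-- The algebra map `(id ⊗ Δ) ∘ Δ`. -/
def comulRight : H →ₐ[k] H ⊗[k] (H ⊗[k] H) :=
  (Algebra.TensorProduct.map (AlgHom.id k H) QB.comul).comp QB.comul

/-- Quasi-coassociativity in the form `Φ (Δ ⊗ id)(Δ h) = (id ⊗ Δ)(Δ h) Φ`. -/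
theorem reassoc_mul_comulLeft (h : H) :
    QB.reassoc * QB.comulLeft h = QB.comulRight h * QB.reassoc := by
  set Ψ : H ⊗[k] (H ⊗[k] H) :=
    ∑ q ∈ range QB.nQ, QB.x1 q ⊗ₜ[k] (QB.x2 q ⊗ₜ[k] QB.x3 q) with hΨ
  have hinv : Ψ * QB.reassoc = 1 := by
    simpa [hΨ, reassoc, sum_mul_sum, Algebra.TensorProduct.one_def] using QB.inv_P
  have hco : QB.comulRight h = QB.reassoc * QB.comulLeft h * Ψ := by
    have := QB.coassoc h
    simp only [comulRight, comulLeft, AlgHom.comp_apply, QB.hcomul, map_sum,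
      Algebra.TensorProduct.map_tmul, AlgHom.id_apply, tmul_sum, sum_tmul, reassoc, hΨ,
      AlgEquiv.coe_toAlgHom, Algebra.TensorProduct.assoc_tmul, mul_assoc] at this ⊢
    simp only [sum_mul]
    simp only [mul_sum, Algebra.TensorProduct.tmul_mul_tmul]
    exact this
  rw [hco, mul_assoc, hinv, mul_one]

end QuasiBialgebra

namespace RightComoduleAlgebra

variable {k : Type*} [Field k] {H : Type*} [Ring H] [Algebra k H] {QB : QuasiBialgebra k H}
  {A : Type*} [Ring A] [Algebra k A] (CA : RightComoduleAlgebra QB A)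

/-- The reassociator `Φ_ρ`, viewed in `(𝔄 ⊗ H) ⊗ H`. -/
def reassoc : (A ⊗[k] H) ⊗[k] H :=
  ∑ s ∈ range CA.nP, (CA.P1 s ⊗ₜ[k] CA.P2 s) ⊗ₜ[k] CA.P3 s

/-- The algebra map `id ⊗ Δ`, with values in `(𝔄 ⊗ H) ⊗ H`. -/
def idComul (A : Type*) [Ring A] [Algebra k A] (QB : QuasiBialgebra k H) :
    A ⊗[k] H →ₐ[k] (A ⊗[k] H) ⊗[k] H :=
  (Algebra.TensorProduct.assoc k k k A H H).symm.toAlgHom.comp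
    (Algebra.TensorProduct.map (AlgHom.id k A) QB.comul)

theorem idComul_tmul (a : A) (h : H) : idComul A QB (a ⊗ₜ[k] h) =
    ∑ i ∈ range QB.nD, (a ⊗ₜ[k] QB.D1 h i) ⊗ₜ[k] QB.D2 h i := by
  simp [idComul, QB.hcomul, tmul_sum]

/-- The coaction `m ↦ (id ⊗ Δ)(m) Φ_ρ` of `𝔄 ⊗ H`. -/
def coaction : A ⊗[k] H →ₗ[k] (A ⊗[k] H) ⊗[k] H :=
  LinearMap.mulRight k CA.reassoc ∘ₗ (idComul A QB).toLinearMap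

theorem coaction_apply (m : A ⊗[k] H) : CA.coaction m = idComul A QB m * CA.reassoc := rfl

theorem coaction_tmul (a : A) (h : H) : CA.coaction (a ⊗ₜ[k] h) =
    ∑ i ∈ range QB.nD, ∑ s ∈ range CA.nP,
      ((a * CA.P1 s) ⊗ₜ[k] (QB.D1 h i * CA.P2 s)) ⊗ₜ[k] (QB.D2 h i * CA.P3 s) := by
  simp [coaction_apply, idComul_tmul, reassoc, sum_mul_sum]

/-- The left action `h ≻ m = (1 ⊗ h) m`. -/
def leftAction : H →ₗ[k] A ⊗[k] H →ₗ[k] A ⊗[k] H :=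
  LinearMap.mul k (A ⊗[k] H) ∘ₗ
    (Algebra.TensorProduct.includeRight : H →ₐ[k] A ⊗[k] H).toLinearMap

theorem leftAction_eq (h : H) :
    leftAction (k := k) (A := A) h = LinearMap.mulLeft k ((1 : A) ⊗ₜ[k] h) := rfl

/-- The right action `m ≺ a = m ρ(a)`. -/
def rightAction : A →ₗ[k] A ⊗[k] H →ₗ[k] A ⊗[k] H :=
  (LinearMap.mul k (A ⊗[k] H)).flip ∘ₗ CA.rho.toLinearMap

theorem rightAction_eq (a : A) : CA.rightAction a = LinearMap.mulRight k (CA.rho a) := rfl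

/-- Quasi-coassociativity of `ρ`: `Φ_ρ (ρ ⊗ id)(ρ a) = (id ⊗ Δ)(ρ a) Φ_ρ`. -/
theorem reassoc_mul_rho (a : A) :
    CA.reassoc * Algebra.TensorProduct.map CA.rho (AlgHom.id k H) (CA.rho a) =
      idComul A QB (CA.rho a) * CA.reassoc := by
  have := congrArg (Algebra.TensorProduct.assoc k k k A H H).symm (CA.rca1 a)
  simp only [map_sum, Algebra.TensorProduct.assoc_symm_tmul] at this
  simp only [reassoc, CA.hrho, map_sum, Algebra.TensorProduct.map_tmul, AlgHom.id_apply,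
    sum_tmul, idComul_tmul, sum_mul]
  simp only [mul_sum, Algebra.TensorProduct.tmul_mul_tmul]
  exact this

theorem counit_coaction (m : A ⊗[k] H) :
    TensorProduct.rid k (A ⊗[k] H)
      (TensorProduct.map LinearMap.id QB.counit.toLinearMap (CA.coaction m)) = m := by
  set E : (A ⊗[k] H) ⊗[k] H →ₐ[k] A ⊗[k] H :=
    (Algebra.TensorProduct.rid k k (A ⊗[k] H)).toAlgHom.comp
      (Algebra.TensorProduct.map (AlgHom.id k _) QB.counit) with hE
  have hEP : E CA.reassoc = 1 := by
    simpa [hE, reassoc, Algebra.TensorProduct.one_def] using CA.rca4b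
  have hEm : E (idComul A QB m) = m := by
    induction m using TensorProduct.induction_on with
    | zero => simp
    | tmul a h =>
      conv_rhs => rw [← QB.counit_r h]
      simp [hE, idComul_tmul, tmul_sum]
    | add x y hx hy => rw [map_add, map_add, hx, hy]
  change E (CA.coaction m) = m
  rw [coaction_apply, map_mul, hEP, hEm, mul_one]

/-- The algebra map `(𝔄 ⊗ H) ⊗ H → (𝔄 ⊗ H) ⊗ (H ⊗ H)` comultiplying the middle factor. -/
def comulMiddle (A : Type*) [Ring A] [Algebra k A] (QB : QuasiBialgebra k H) :
    (A ⊗[k] H) ⊗[k] H →ₐ[k] (A ⊗[k] H) ⊗[k] (H ⊗[k] H) :=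
  (Algebra.TensorProduct.assoc k k k (A ⊗[k] H) H H).toAlgHom.comp
    (Algebra.TensorProduct.map (idComul A QB) (AlgHom.id k H))

/-- The algebra map `(𝔄 ⊗ H) ⊗ H → (𝔄 ⊗ H) ⊗ (H ⊗ H)` comultiplying the last factor. -/
def comulLast (A : Type*) [Ring A] [Algebra k A] (QB : QuasiBialgebra k H) :
    (A ⊗[k] H) ⊗[k] H →ₐ[k] (A ⊗[k] H) ⊗[k] (H ⊗[k] H) :=
  Algebra.TensorProduct.map (AlgHom.id k (A ⊗[k] H)) QB.comul

/-- The element `1 ⊗ Φ`. -/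
def oneReassoc (A : Type*) [Ring A] [Algebra k A] (QB : QuasiBialgebra k H) :
    (A ⊗[k] H) ⊗[k] (H ⊗[k] H) :=
  ∑ s ∈ range QB.nP, ((1 : A) ⊗ₜ[k] QB.X1 s) ⊗ₜ[k] (QB.X2 s ⊗ₜ[k] QB.X3 s)

/-- The element `Φ_ρ ⊗ 1`. -/
def reassocOne : (A ⊗[k] H) ⊗[k] (H ⊗[k] H) :=
  Algebra.TensorProduct.assoc k k k (A ⊗[k] H) H H (CA.reassoc ⊗ₜ[k] 1)

/-- The element `(ρ ⊗ id ⊗ id)(Φ_ρ)`. -/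
def rhoReassoc : (A ⊗[k] H) ⊗[k] (H ⊗[k] H) :=
  ∑ j ∈ range CA.nP, CA.rho (CA.P1 j) ⊗ₜ[k] (CA.P2 j ⊗ₜ[k] CA.P3 j)

/-- The 3-cocycle identity of `Φ_ρ`. -/
theorem cocycle :
    oneReassoc A QB * comulMiddle A QB CA.reassoc * CA.reassocOne =
      comulLast A QB CA.reassoc * CA.rhoReassoc := by
  have := congrArg (Algebra.TensorProduct.assoc k k k A H (H ⊗[k] H)).symm CA.rca2
  simp only [map_sum, Algebra.TensorProduct.assoc_symm_tmul, mul_assoc] at this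
  simp only [oneReassoc, comulMiddle, comulLast, reassocOne, rhoReassoc, reassoc, QB.hcomul,
    CA.hrho, map_sum, AlgHom.comp_apply, AlgEquiv.coe_toAlgHom, Algebra.TensorProduct.map_tmul,
    AlgHom.id_apply, idComul_tmul, sum_tmul, tmul_sum, Algebra.TensorProduct.assoc_tmul,
    mul_assoc, sum_mul]
  simp only [mul_sum, Algebra.TensorProduct.tmul_mul_tmul, mul_one, one_mul]
  exact this

theorem oneReassoc_mul_comulMiddle (m : A ⊗[k] H) :
    oneReassoc A QB * comulMiddle A QB (idComul A QB m) =
      comulLast A QB (idComul A QB m) * oneReassoc A QB := by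
  set J : H ⊗[k] (H ⊗[k] H) →ₐ[k] (A ⊗[k] H) ⊗[k] (H ⊗[k] H) :=
    (Algebra.TensorProduct.assoc k k k A H (H ⊗[k] H)).symm.toAlgHom.comp
      Algebra.TensorProduct.includeRight with hJ
  have hΦ : oneReassoc A QB = J QB.reassoc := by
    simp [hJ, oneReassoc, QuasiBialgebra.reassoc]
  induction m using TensorProduct.induction_on with
  | zero => simp
  | tmul a h =>
    have hleft : comulMiddle A QB (idComul A QB (a ⊗ₜ[k] h)) =
        ((a ⊗ₜ[k] 1) ⊗ₜ[k] 1) * J (QB.comulLeft h) := by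
      simp [hJ, comulMiddle, idComul_tmul, QuasiBialgebra.comulLeft, QB.hcomul, sum_tmul, mul_sum]
    have hright : comulLast A QB (idComul A QB (a ⊗ₜ[k] h)) =
        ((a ⊗ₜ[k] 1) ⊗ₜ[k] 1) * J (QB.comulRight h) := by
      simp [hJ, comulLast, idComul_tmul, QuasiBialgebra.comulRight, QB.hcomul, tmul_sum, mul_sum]
    have hcomm : J QB.reassoc * ((a ⊗ₜ[k] 1) ⊗ₜ[k] 1) =
        ((a ⊗ₜ[k] 1) ⊗ₜ[k] 1) * J QB.reassoc := by
      simp [← hΦ, oneReassoc, sum_mul, mul_sum]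
    rw [hleft, hright, hΦ, ← mul_assoc, hcomm, mul_assoc, mul_assoc, ← map_mul, ← map_mul,
      QB.reassoc_mul_comulLeft]
  | add x y hx hy => simp only [map_add, mul_add, add_mul, hx, hy]

theorem coaction_coaction (m : A ⊗[k] H) :
    TensorProduct.assoc k (A ⊗[k] H) H H
      (TensorProduct.map CA.coaction LinearMap.id (CA.coaction m)) =
    comulMiddle A QB (CA.coaction m) * CA.reassocOne := by
  have key (z : (A ⊗[k] H) ⊗[k] H) : TensorProduct.map CA.coaction LinearMap.id z =
      Algebra.TensorProduct.map (idComul A QB) (AlgHom.id k H) z * (CA.reassoc ⊗ₜ[k] 1) := by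
    induction z using TensorProduct.induction_on with
    | zero => simp
    | tmul x y => simp [coaction_apply]
    | add x y hx hy => rw [map_add, map_add, hx, hy, add_mul]
  rw [key]
  exact map_mul (Algebra.TensorProduct.assoc k k k (A ⊗[k] H) H H) _ _

theorem coassoc_coaction (m : A ⊗[k] H) :
    oneReassoc A QB * (comulMiddle A QB (CA.coaction m) * CA.reassocOne) =
      comulLast A QB (CA.coaction m) * CA.rhoReassoc := by
  rw [coaction_apply, map_mul, map_mul, mul_assoc, mul_assoc, ← CA.cocycle, ← mul_assoc,
    oneReassoc_mul_comulMiddle]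
  simp only [mul_assoc]

/-- The two-sided Hopf module `𝔄 ⊗ H`. -/
def tensorHopfModule : TwoSidedHopfModule QB CA (A ⊗[k] H) where
  ha := leftAction
  ha_one m := by rw [leftAction_eq, LinearMap.mulLeft_apply]; exact one_mul m
  ha_mul g h m := by simp [leftAction_eq, ← mul_assoc]
  ra := CA.rightAction
  ra_one m := by simp [rightAction_eq]
  ra_mul a b m := by simp [rightAction_eq, mul_assoc]
  ha_ra h a m := by simp [rightAction_eq, leftAction_eq, mul_assoc]
  rho := CA.coaction
  counit_rho := CA.counit_coaction
  coassoc_rho m := by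
    have := CA.coassoc_coaction m
    rw [← coaction_coaction, oneReassoc, rhoReassoc, sum_mul, mul_sum] at this
    simp only [leftAction_eq, rightAction_eq, ← LinearMap.mulLeft_tmul,
      ← LinearMap.mulRight_tmul]
    exact this
  colin_l h m := by
    simp only [leftAction_eq, ← LinearMap.mulLeft_tmul, LinearMap.mulLeft_apply, coaction_apply,
      map_mul, idComul_tmul, sum_mul, mul_assoc]
  colin_r a m := by
    simp only [rightAction_eq, ← LinearMap.mulRight_tmul, LinearMap.mulRight_apply, coaction_apply,
      map_mul, mul_assoc]
    rw [← reassoc_mul_rho, CA.hrho]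
    simp [mul_sum]

end RightComoduleAlgebra

/-- Let `H` be a quasi-Hopf algebra and `𝔄` a right `H`-comodule
algebra. Then `𝒱 = 𝔄 ⊗ H` is a two-sided `(𝔄,H)`-Hopf module with
`h ≻ (a⊗h') = a ⊗ hh'`, `(a⊗h) ≺ a' = ∑ a a'⟨0⟩ ⊗ h a'⟨1⟩` and
`ρ(a⊗h) = ∑ a X̃¹ρ ⊗ h₁ X̃²ρ ⊗ h₂ X̃³ρ`. -/
theorem tensor_A_H_is_two_sided_hopf_module
    {k : Type*} [Field k] {H : Type*} [Ring H] [Algebra k H]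
    (QH : QuasiHopfAlgebra k H)
    {A : Type*} [Ring A] [Algebra k A]
    (CA : RightComoduleAlgebra QH.toQuasiBialgebra A) :
    ∃ T : TwoSidedHopfModule QH.toQuasiBialgebra CA (A ⊗[k] H),
      (∀ (h : H) (a : A) (h' : H), T.ha h (a ⊗ₜ[k] h') = a ⊗ₜ[k] (h * h')) ∧
      (∀ (a' a : A) (h : H), T.ra a' (a ⊗ₜ[k] h) =
        ∑ i ∈ Finset.range CA.nR, (a * CA.r0 a' i) ⊗ₜ[k] (h * CA.r1 a' i)) ∧
      (∀ (a : A) (h : H), T.rho (a ⊗ₜ[k] h) =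
        ∑ i ∈ Finset.range QH.nD, ∑ s ∈ Finset.range CA.nP,
          ((a * CA.P1 s) ⊗ₜ[k] (QH.D1 h i * CA.P2 s)) ⊗ₜ[k] (QH.D2 h i * CA.P3 s)) := by
  refine ⟨CA.tensorHopfModule, fun h a h' => ?_, fun a' a h => ?_, fun a h => CA.coaction_tmul a h⟩
  · change RightComoduleAlgebra.leftAction h (a ⊗ₜ[k] h') = _
    simp [RightComoduleAlgebra.leftAction_eq]
  · change CA.rightAction a' (a ⊗ₜ[k] h) = _
    simp [RightComoduleAlgebra.rightAction_eq, CA.hrho, mul_sum]
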